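/- arXiv:1102.0959 — 2 statements merged into one kernel-verified Lean document; each statement's English description precedes it below -/
import Mathlib

section
/- Let n ≥ 2 be an integer, u₊ : (0,∞) → (−1,1) the inverse of Γ₊, and H₊(t) = (1 + u₊(t)²/(n−1))^{(1/n) − (1/2)} · (1 − u₊(t)²)^{−1/n}. Then: (i) H₊(1/t) = H₊(t) for all t > 0; (ii) H₊(t) ≥ 1 for all t > 0; (iii) H₊ is strictly convex on (0,∞). -/
/-- The function `Γ₊` from the paper:
`Γ₊(s) = ((1+s)/(1-s))^(1/n) · exp( ((2-n)/(n√(n-1))) · arctan(s/√(n-1)) )`. -/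
noncomputable def GammaPlus (n : ℕ) (s : ℝ) : ℝ :=
  ((1 + s) / (1 - s)) ^ ((1 : ℝ) / (n : ℝ)) *
    Real.exp (((2 - (n : ℝ)) / ((n : ℝ) * Real.sqrt ((n : ℝ) - 1))) *
      Real.arctan (s / Real.sqrt ((n : ℝ) - 1)))

/-!
The functions `Γ₊` and `h(s) = (1 + s²/(n-1))^(1/n - 1/2) · (1 - s²)^(-1/n)` have logarithmic
derivatives `d(s)` and `s d(s)` for the same positive rational function `d`. Hence `H₊ = h ∘ u₊`,
whose graph is the parametric curve `(Γ₊, h)`, has derivative `s h/Γ₊` at `t = Γ₊(s)`, and the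
sign of the `s`-derivative of this slope is that of `(n-1)(1+s) + s² - s`, positive on `(-1, 1)`
as soon as `n - 1 > (√2 - 1)²`; this gives strict convexity. Since `Γ₊(-s) = Γ₊(s)⁻¹` and `h` is
even, `H₊` is invariant under `t ↦ 1/t`, and a convex function with this symmetry is minimal at
`t = 1`, where `H₊(1) = h(0) = 1`.
-/

open Set Filter Topology Real

section InverseFunction

variable {I J : Set ℝ} {x u : ℝ → ℝ}

lemma strictMonoOn_of_leftInvOn (hx : StrictMonoOn x I) (hu : MapsTo u J I)
    (hxu : LeftInvOn x u J) : StrictMonoOn u J := by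
  intro a ha b hb hab
  rwa [← hx.lt_iff_lt (hu ha) (hu hb), hxu ha, hxu hb]

lemma continuousAt_of_leftInvOn (hI : IsOpen I) (hJ : IsOpen J) (hx : StrictMonoOn x I)
    (hxIJ : MapsTo x I J) (hu : MapsTo u J I) (hxu : LeftInvOn x u J) {t : ℝ} (ht : t ∈ J) :
    ContinuousAt u t := by
  have hux : LeftInvOn u x I := hx.injOn.rightInvOn_of_leftInvOn hxu hxIJ hu
  refine (strictMonoOn_of_leftInvOn hx hu hxu).continuousAt_of_image_mem_nhds (hJ.mem_nhds ht) ?_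
  exact mem_of_superset (hI.mem_nhds (hu ht)) fun s hs => ⟨x s, hxIJ hs, hux hs⟩

lemma strictMonoOn_of_hasDerivAt_pos {x' : ℝ → ℝ} (hI : Convex ℝ I)
    (hx : ∀ s ∈ I, HasDerivAt x (x' s) s) (hx' : ∀ s ∈ I, 0 < x' s) : StrictMonoOn x I :=
  strictMonoOn_of_hasDerivWithinAt_pos hI
    (fun s hs => (hx s hs).continuousAt.continuousWithinAt)
    (fun s hs => (hx s (interior_subset hs)).hasDerivWithinAt)
    (fun s hs => hx' s (interior_subset hs))

lemma strictConvexOn_comp_of_strictMonoOn_slope {y x' y' : ℝ → ℝ}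
    (hI : IsOpen I) (hI_convex : Convex ℝ I) (hJ : IsOpen J) (hJ_convex : Convex ℝ J)
    (hx : ∀ s ∈ I, HasDerivAt x (x' s) s) (hx' : ∀ s ∈ I, 0 < x' s)
    (hy : ∀ s ∈ I, HasDerivAt y (y' s) s) (hslope : StrictMonoOn (fun s => y' s / x' s) I)
    (hxIJ : MapsTo x I J) (hu : MapsTo u J I) (hxu : LeftInvOn x u J) :
    StrictConvexOn ℝ J (y ∘ u) := by
  have hx_mono : StrictMonoOn x I := strictMonoOn_of_hasDerivAt_pos hI_convex hx hx'
  have hu_deriv : ∀ t ∈ J, HasDerivAt u (x' (u t))⁻¹ t := fun t ht =>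
    (hx _ (hu ht)).of_local_left_inverse
      (continuousAt_of_leftInvOn hI hJ hx_mono hxIJ hu hxu ht) (hx' _ (hu ht)).ne'
      (eventually_of_mem (hJ.mem_nhds ht) hxu)
  have hyu_deriv : ∀ t ∈ J, HasDerivAt (y ∘ u) (y' (u t) / x' (u t)) t := fun t ht =>
    (hy _ (hu ht)).comp t (hu_deriv t ht)
  refine StrictMonoOn.strictConvexOn_of_deriv hJ_convex
    (fun t ht => (hyu_deriv t ht).continuousAt.continuousWithinAt) ?_
  rw [hJ.interior_eq]
  intro a ha b hb hab
  rw [(hyu_deriv a ha).deriv, (hyu_deriv b hb).deriv]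
  exact hslope (hu ha) (hu hb) (strictMonoOn_of_leftInvOn hx_mono hu hxu ha hb hab)

end InverseFunction

lemma apply_one_le_of_convexOn_of_inv_invariant {f : ℝ → ℝ} (hf : ConvexOn ℝ (Ioi 0) f)
    (hf_inv : ∀ t, 0 < t → f (1 / t) = f t) {t : ℝ} (ht : 0 < t) : f 1 ≤ f t := by
  have h_one_mem : (1 : ℝ) ∈ segment ℝ (1 / t) t := by
    rw [segment_eq_uIcc, mem_uIcc, div_le_one ht, le_div_iff₀ ht, one_mul]
    exact (le_total 1 t).imp (fun h => ⟨h, h⟩) (fun h => ⟨h, h⟩)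
  simpa only [hf_inv t ht, max_self] using
    hf.le_max_of_mem_segment (mem_Ioi.2 (one_div_pos.2 ht)) ht h_one_mem

lemma hasDerivAt_rpow_const_of_pos {f : ℝ → ℝ} {f' s : ℝ} (p : ℝ) (hf : HasDerivAt f f' s)
    (hs : 0 < f s) : HasDerivAt (fun s => f s ^ p) (f s ^ p * (p * (f' / f s))) s := by
  refine (hf.rpow_const (Or.inl hs.ne')).congr_deriv ?_
  rw [rpow_sub_one hs.ne']
  ring

lemma hasDerivAt_arctan_div_sqrt {a : ℝ} (ha : 0 < a) (s : ℝ) :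
    HasDerivAt (fun s => arctan (s / √a)) (√a / (a + s ^ 2)) s := by
  refine ((hasDerivAt_id' s).div_const √a).arctan.congr_deriv ?_
  have h_sqrt : √a ≠ 0 := (sqrt_pos.2 ha).ne'
  rw [div_pow, sq_sqrt ha.le]
  field_simp
  rw [sq_sqrt ha.le]

lemma hasDerivAt_one_add_div_one_sub {s : ℝ} (hs : s ≠ 1) :
    HasDerivAt (fun s : ℝ => (1 + s) / (1 - s)) (2 / (1 - s) ^ 2) s := by
  refine (((hasDerivAt_id' s).const_add 1).div ((hasDerivAt_id' s).const_sub 1)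
    (sub_ne_zero.2 hs.symm)).congr_deriv ?_
  ring

/-- The function `Γ₊` with the dimension `n` replaced by a real parameter `ν`. -/
noncomputable def gammaPlusReal (ν s : ℝ) : ℝ :=
  ((1 + s) / (1 - s)) ^ (1 / ν) * exp ((2 - ν) / (ν * √(ν - 1)) * arctan (s / √(ν - 1)))

/-- The function `h` of the real parameter `ν` for which `H₊ = h ∘ u₊`. -/
noncomputable def hPlusProfile (ν s : ℝ) : ℝ :=
  (1 + s ^ 2 / (ν - 1)) ^ (1 / ν - 1 / 2) * (1 - s ^ 2) ^ (-1 / ν)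

/-- The logarithmic derivative of `gammaPlusReal ν` on `(-1, 1)`. -/
noncomputable def gammaPlusLogDeriv (ν s : ℝ) : ℝ :=
  (1 + s ^ 2) / ((1 - s ^ 2) * (ν - 1 + s ^ 2))

lemma one_sub_sq_pos {s : ℝ} (hs : s ∈ Ioo (-1 : ℝ) 1) : 0 < 1 - s ^ 2 :=
  sub_pos.2 ((sq_lt_one_iff_abs_lt_one s).2 (abs_lt.2 hs))

lemma hPlusProfile_zero (ν : ℝ) : hPlusProfile ν 0 = 1 := by
  simp [hPlusProfile]

lemma hPlusProfile_neg (ν s : ℝ) : hPlusProfile ν (-s) = hPlusProfile ν s := by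
  simp only [hPlusProfile, neg_sq]

lemma gammaPlusReal_pos (ν : ℝ) {s : ℝ} (hs : s ∈ Ioo (-1 : ℝ) 1) : 0 < gammaPlusReal ν s :=
  mul_pos (rpow_pos_of_pos (div_pos (by linarith [hs.1]) (by linarith [hs.2])) _) (exp_pos _)

lemma gammaPlusReal_neg (ν : ℝ) {s : ℝ} (hs : s ∈ Ioo (-1 : ℝ) 1) :
    gammaPlusReal ν (-s) = (gammaPlusReal ν s)⁻¹ := by
  have h_ratio : (1 + -s) / (1 - -s) = ((1 + s) / (1 - s))⁻¹ := by
    rw [inv_div, sub_neg_eq_add, ← sub_eq_add_neg]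
  have h_ratio_nonneg : 0 ≤ (1 + s) / (1 - s) :=
    div_nonneg (by linarith [hs.1]) (by linarith [hs.2])
  rw [gammaPlusReal, gammaPlusReal, h_ratio, inv_rpow h_ratio_nonneg, neg_div, arctan_neg,
    mul_neg, exp_neg, mul_inv]

section Parameter

variable {ν s : ℝ}

lemma hPlusProfile_pos (hν : 1 < ν) (hs : s ∈ Ioo (-1 : ℝ) 1) : 0 < hPlusProfile ν s := by
  have h_one_sub_sq : 0 < 1 - s ^ 2 := one_sub_sq_pos hs
  unfold hPlusProfile
  positivity

lemma gammaPlusLogDeriv_pos (hν : 1 < ν) (hs : s ∈ Ioo (-1 : ℝ) 1) :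
    0 < gammaPlusLogDeriv ν s := by
  have h_one_sub_sq : 0 < 1 - s ^ 2 := one_sub_sq_pos hs
  unfold gammaPlusLogDeriv
  positivity

lemma gammaPlusLogDeriv_eq_partialFractions (hν : 1 < ν) (hs : s ∈ Ioo (-1 : ℝ) 1) :
    gammaPlusLogDeriv ν s = (2 / (1 - s ^ 2) + (2 - ν) / (ν - 1 + s ^ 2)) / ν := by
  have hν₀ : ν ≠ 0 := by positivity
  have h_one_sub_sq : 1 - s ^ 2 ≠ 0 := (one_sub_sq_pos hs).ne'
  have h_add_sq : ν - 1 + s ^ 2 ≠ 0 := by nlinarith [sq_nonneg s]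
  unfold gammaPlusLogDeriv
  field_simp
  ring

lemma hasDerivAt_gammaPlusReal (hν : 1 < ν) (hs : s ∈ Ioo (-1 : ℝ) 1) :
    HasDerivAt (gammaPlusReal ν) (gammaPlusReal ν s * gammaPlusLogDeriv ν s) s := by
  have h_add : 0 < 1 + s := by linarith [hs.1]
  have h_sub : 0 < 1 - s := sub_pos.2 hs.2
  have hν' : 0 < ν - 1 := sub_pos.2 hν
  have h_rpow := hasDerivAt_rpow_const_of_pos (1 / ν)
    (hasDerivAt_one_add_div_one_sub hs.2.ne) (div_pos h_add h_sub)
  have h_exp := ((hasDerivAt_arctan_div_sqrt hν' s).const_mul ((2 - ν) / (ν * √(ν - 1)))).exp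
  have h_rpow_rate : 1 / ν * (2 / (1 - s) ^ 2 / ((1 + s) / (1 - s))) = 2 / (1 - s ^ 2) / ν := by
    rw [show 1 - s ^ 2 = (1 + s) * (1 - s) by ring]
    field_simp
  have h_exp_rate : (2 - ν) / (ν * √(ν - 1)) * (√(ν - 1) / (ν - 1 + s ^ 2)) =
      (2 - ν) / (ν - 1 + s ^ 2) / ν := by
    have h_sqrt : √(ν - 1) ≠ 0 := (sqrt_pos.2 hν').ne'
    field_simp
  refine (h_rpow.mul h_exp).congr_deriv ?_
  rw [h_rpow_rate, h_exp_rate, gammaPlusLogDeriv_eq_partialFractions hν hs, gammaPlusReal]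
  ring

lemma hasDerivAt_hPlusProfile (hν : 1 < ν) (hs : s ∈ Ioo (-1 : ℝ) 1) :
    HasDerivAt (hPlusProfile ν) (hPlusProfile ν s * (s * gammaPlusLogDeriv ν s)) s := by
  have hν' : 0 < ν - 1 := sub_pos.2 hν
  have h_one_sub_sq : 0 < 1 - s ^ 2 := one_sub_sq_pos hs
  have h_left := hasDerivAt_rpow_const_of_pos (1 / ν - 1 / 2)
    (((hasDerivAt_pow 2 s).div_const (ν - 1)).const_add 1) (by positivity)
  have h_right := hasDerivAt_rpow_const_of_pos (-1 / ν)
    ((hasDerivAt_pow 2 s).const_sub 1) h_one_sub_sq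
  have h_left_rate : (1 / ν - 1 / 2) * (2 * s / (ν - 1) / (1 + s ^ 2 / (ν - 1))) =
      s * ((2 - ν) / (ν - 1 + s ^ 2) / ν) := by
    field_simp
  refine (h_left.mul h_right).congr_deriv ?_
  norm_num only [pow_one]
  rw [h_left_rate, gammaPlusLogDeriv_eq_partialFractions hν hs, hPlusProfile]
  ring

lemma strictMonoOn_gammaPlusReal (hν : 1 < ν) :
    StrictMonoOn (gammaPlusReal ν) (Ioo (-1 : ℝ) 1) :=
  strictMonoOn_of_hasDerivAt_pos (convex_Ioo _ _) (fun _ hs => hasDerivAt_gammaPlusReal hν hs)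
    fun _ hs => mul_pos (gammaPlusReal_pos ν hs) (gammaPlusLogDeriv_pos hν hs)

lemma one_lt_of_sq_sqrt_two_sub_one_lt (hν : (√2 - 1) ^ 2 < ν - 1) : 1 < ν :=
  sub_pos.1 ((sq_nonneg _).trans_lt hν)

lemma sq_sqrt_two_sub_one_lt_natCast_sub_one {n : ℕ} (hn : 2 ≤ n) :
    (√2 - 1) ^ 2 < (n : ℝ) - 1 := by
  have hn' : (2 : ℝ) ≤ n := mod_cast hn
  nlinarith [sq_sqrt (zero_le_two (α := ℝ)), one_lt_sqrt_two]

lemma mul_gammaPlusLogDeriv_lt_one (hν : (√2 - 1) ^ 2 < ν - 1) (hs : s ∈ Ioo (-1 : ℝ) 1) :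
    s * (1 - s) * gammaPlusLogDeriv ν s < 1 := by
  have h_add : 0 < 1 + s := by linarith [hs.1]
  have h_sub : 0 < 1 - s := sub_pos.2 hs.2
  have h_one_sub_sq : 0 < 1 - s ^ 2 := one_sub_sq_pos hs
  have h_add_sq : 0 < ν - 1 + s ^ 2 := by
    linarith [one_lt_of_sq_sqrt_two_sub_one_lt hν, sq_nonneg s]
  have h_quadratic : 0 < (ν - 1) * (1 + s) + s ^ 2 - s :=
    calc
      0 ≤ (s - (√2 - 1)) ^ 2 := sq_nonneg _
      _ = (√2 - 1) ^ 2 * (1 + s) + s ^ 2 - s := by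
        linear_combination (-s) * sq_sqrt (zero_le_two (α := ℝ))
      _ < (ν - 1) * (1 + s) + s ^ 2 - s := by gcongr
  rw [gammaPlusLogDeriv, ← mul_div_assoc, div_lt_one (by positivity), ← sub_pos]
  calc
    0 < (1 - s) * ((ν - 1) * (1 + s) + s ^ 2 - s) := mul_pos h_sub h_quadratic
    _ = (1 - s ^ 2) * (ν - 1 + s ^ 2) - s * (1 - s) * (1 + s ^ 2) := by ring

lemma strictMonoOn_mul_hPlusProfile_div_gammaPlusReal (hν : (√2 - 1) ^ 2 < ν - 1) :
    StrictMonoOn (fun s => s * (hPlusProfile ν s / gammaPlusReal ν s)) (Ioo (-1 : ℝ) 1) := by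
  have hν₁ : 1 < ν := one_lt_of_sq_sqrt_two_sub_one_lt hν
  refine strictMonoOn_of_hasDerivAt_pos
    (x' := fun s => hPlusProfile ν s / gammaPlusReal ν s *
      (1 - s * (1 - s) * gammaPlusLogDeriv ν s)) (convex_Ioo _ _) (fun s hs => ?_) fun s hs => ?_
  · have h_gamma : gammaPlusReal ν s ≠ 0 := (gammaPlusReal_pos ν hs).ne'
    refine ((hasDerivAt_id' s).mul ((hasDerivAt_hPlusProfile hν₁ hs).div
      (hasDerivAt_gammaPlusReal hν₁ hs) h_gamma)).congr_deriv ?_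
    simp only [Pi.div_apply]
    field_simp
    ring
  · exact mul_pos (div_pos (hPlusProfile_pos hν₁ hs) (gammaPlusReal_pos ν hs))
      (sub_pos.2 (mul_gammaPlusLogDeriv_lt_one hν hs))

end Parameter

section InverseOfGammaPlus

variable {ν : ℝ} {u : ℝ → ℝ}

lemma apply_one_div_eq_neg_of_leftInvOn_gammaPlusReal (hν : 1 < ν)
    (hu_mem : MapsTo u (Ioi 0) (Ioo (-1) 1)) (hu_inv : LeftInvOn (gammaPlusReal ν) u (Ioi 0))
    {t : ℝ} (ht : 0 < t) : u (1 / t) = -u t := by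
  have h_neg_mem : -u t ∈ Ioo (-1 : ℝ) 1 :=
    ⟨neg_lt_neg (hu_mem ht).2, neg_lt.1 (hu_mem ht).1⟩
  have ht_inv : 1 / t ∈ Ioi (0 : ℝ) := one_div_pos.2 ht
  apply (strictMonoOn_gammaPlusReal hν).injOn (hu_mem ht_inv) h_neg_mem
  rw [hu_inv ht_inv, gammaPlusReal_neg ν (hu_mem ht), hu_inv ht, one_div]

lemma strictConvexOn_hPlusProfile_comp (hν : (√2 - 1) ^ 2 < ν - 1)
    (hu_mem : MapsTo u (Ioi 0) (Ioo (-1) 1)) (hu_inv : LeftInvOn (gammaPlusReal ν) u (Ioi 0)) :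
    StrictConvexOn ℝ (Ioi 0) (hPlusProfile ν ∘ u) := by
  have hν₁ : 1 < ν := one_lt_of_sq_sqrt_two_sub_one_lt hν
  refine strictConvexOn_comp_of_strictMonoOn_slope isOpen_Ioo (convex_Ioo _ _) isOpen_Ioi
    (convex_Ioi _) (fun _ hs => hasDerivAt_gammaPlusReal hν₁ hs)
    (fun _ hs => mul_pos (gammaPlusReal_pos ν hs) (gammaPlusLogDeriv_pos hν₁ hs))
    (fun _ hs => hasDerivAt_hPlusProfile hν₁ hs) ?_
    (fun _ hs => gammaPlusReal_pos ν hs) hu_mem hu_inv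
  refine (strictMonoOn_mul_hPlusProfile_div_gammaPlusReal hν).congr fun s hs => ?_
  have h_logDeriv : gammaPlusLogDeriv ν s ≠ 0 := (gammaPlusLogDeriv_pos hν₁ hs).ne'
  field_simp

end InverseOfGammaPlus

theorem stmt6_general {ν : ℝ} (hν : (√2 - 1) ^ 2 < ν - 1) (u : ℝ → ℝ)
    (hu_mem : ∀ t, 0 < t → u t ∈ Ioo (-1 : ℝ) 1)
    (hu_inv : ∀ t, 0 < t → gammaPlusReal ν (u t) = t)
    (H : ℝ → ℝ) (hH : ∀ t, 0 < t → H t = hPlusProfile ν (u t)) :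
    (∀ t, 0 < t → H (1 / t) = H t) ∧ (∀ t, 0 < t → 1 ≤ H t) ∧
      StrictConvexOn ℝ (Ioi 0) H := by
  have hu_one_div : ∀ t, 0 < t → u (1 / t) = -u t := fun t ht =>
    apply_one_div_eq_neg_of_leftInvOn_gammaPlusReal
      (one_lt_of_sq_sqrt_two_sub_one_lt hν) hu_mem hu_inv ht
  have hH_symm : ∀ t, 0 < t → H (1 / t) = H t := fun t ht => by
    rw [hH _ (one_div_pos.2 ht), hH t ht, hu_one_div t ht, hPlusProfile_neg]
  have hH_convex : StrictConvexOn ℝ (Ioi 0) H :=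
    (strictConvexOn_hPlusProfile_comp hν hu_mem hu_inv).congr fun t ht => (hH t ht).symm
  have hu_one : u 1 = 0 := by
    simpa only [one_div_one, self_eq_neg] using hu_one_div 1 one_pos
  have hH_one : H 1 = 1 := by rw [hH 1 one_pos, hu_one, hPlusProfile_zero]
  exact ⟨hH_symm, fun t ht => hH_one ▸
    apply_one_le_of_convexOn_of_inv_invariant hH_convex.convexOn hH_symm ht, hH_convex⟩

/-- With `u₊` the inverse of `Γ₊` and
`H₊(t) = (1 + u₊(t)²/(n-1))^(1/n - 1/2) · (1 - u₊(t)²)^(-1/n)` one has the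
symmetry `H₊(1/t) = H₊(t)`, the lower bound `H₊(t) ≥ 1`, and strict convexity
of `H₊` on `(0,∞)`. -/
theorem stmt6 (n : ℕ) (hn : 2 ≤ n) (u : ℝ → ℝ)
    (hu_mem : ∀ t : ℝ, 0 < t → u t ∈ Set.Ioo (-1 : ℝ) 1)
    (hu_inv : ∀ t : ℝ, 0 < t → GammaPlus n (u t) = t)
    (H : ℝ → ℝ)
    (hH : ∀ t : ℝ, 0 < t →
      H t = (1 + (u t) ^ 2 / ((n : ℝ) - 1)) ^ ((1 : ℝ) / (n : ℝ) - 1 / 2) *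
        (1 - (u t) ^ 2) ^ (-(1 : ℝ) / (n : ℝ))) :
    (∀ t : ℝ, 0 < t → H (1 / t) = H t) ∧
    (∀ t : ℝ, 0 < t → 1 ≤ H t) ∧
    StrictConvexOn ℝ (Set.Ioi (0 : ℝ)) H :=
  stmt6_general (sq_sqrt_two_sub_one_lt_natCast_sub_one hn) u hu_mem hu_inv H hH
end

section
/- Let n ≥ 2 be an integer, u₊ : (0,∞) → (−1,1) the inverse of Γ₊, H₊(t) = (1 + u₊(t)²/(n−1))^{(1/n) − (1/2)} · (1 − u₊(t)²)^{−1/n}, and Θ₊ = (1 − 1/n)^{(n−2)/(2n)} · 4^{−1/n} · exp( ((n−2)/(n·√(n−1))) · arctan( 1/√(n−1) ) ). Then lim_{t→∞} H₊(t)/t = Θ₊ and lim_{t→0⁺} t·H₊(t) = Θ₊; moreover there exists a constant C > 0 such that 0 < H₊(t) − Θ₊·t ≤ C·t^{1−n} for all t ≥ 1. -/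
open Filter Topology

/-!
Put `s = u₊(t)`, so that `t = Γ₊(s)`. The quotient `H₊ / Γ₊`, as a function of `s ∈ (-1, 1)`,
extends smoothly across `s = 1`: the factors `1 - s` cancel, and its value there is `Θ₊`. It is
strictly decreasing, because its logarithmic derivative is `-(1 + s²) / ((n - 1 + s²) (1 + s))`;
hence `H₊(t) > Θ₊ t`. On `[0, 1]`, which is where `s` lies once `t ≥ 1`, the quotient is Lipschitz,
so that `H₊(t) - Θ₊ t = O((1 - s) t)`, and `(1 - s) tⁿ` is bounded by the explicit formula for
`Γ₊`. The limit at `0` is the limit at `∞` for the inverse `t ↦ -u₊(1 / t)`, as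
`Γ₊(-s) = 1 / Γ₊(s)` and `H₊` is even in `s`. The argument is carried out for a real number `p > 1`
in place of `n`.
-/

section RealParameter

open Real Set Asymptotics

/-- The function `Γ₊` with a real parameter `p` in place of the dimension `n`. -/
noncomputable def realGammaPlus (p s : ℝ) : ℝ :=
  ((1 + s) / (1 - s)) ^ (1 / p) * exp ((2 - p) / (p * √(p - 1)) * arctan (s / √(p - 1)))

/-- The function `H₊` in the variable `s = u₊(t)`, with a real parameter `p` in place of `n`. -/
noncomputable def profilePlus (p s : ℝ) : ℝ :=
  (1 + s ^ 2 / (p - 1)) ^ (1 / p - 1 / 2) * (1 - s ^ 2) ^ (-1 / p)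

/-- The asymptotic slope `Θ₊`, with a real parameter `p` in place of `n`. -/
noncomputable def slopePlus (p : ℝ) : ℝ :=
  (1 - 1 / p) ^ ((p - 2) / (2 * p)) * 4 ^ (-1 / p) *
    exp ((p - 2) / (p * √(p - 1)) * arctan (1 / √(p - 1)))

/-- The arctangent term by which the logarithms of `Γ₊` and of `H₊ / Γ₊` differ from combinations of
logarithms of polynomials. -/
noncomputable def arctanTerm (p s : ℝ) : ℝ :=
  (p - 2) / (p * √(p - 1)) * arctan (s / √(p - 1))

/-- The logarithm of `Γ₊` on `(-1, 1)`. -/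
noncomputable def logGammaPlus (p s : ℝ) : ℝ :=
  1 / p * (log (1 + s) - log (1 - s)) - arctanTerm p s

/-- The logarithm of the quotient `H₊ / Γ₊`, in a form that makes sense and is smooth for all
`s > -1`. -/
noncomputable def logQuotient (p s : ℝ) : ℝ :=
  (1 / p - 1 / 2) * log (1 + s ^ 2 / (p - 1)) - 2 / p * log (1 + s) + arctanTerm p s

variable {p s : ℝ}

theorem arctanTerm_zero (p : ℝ) : arctanTerm p 0 = 0 := by
  simp [arctanTerm]

theorem arctanTerm_neg (p s : ℝ) : arctanTerm p (-s) = -arctanTerm p s := by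
  simp only [arctanTerm, neg_div, arctan_neg, mul_neg]

theorem abs_arctanTerm_le (p s : ℝ) :
    |arctanTerm p s| ≤ |(p - 2) / (p * √(p - 1))| * (π / 2) := by
  rw [arctanTerm, abs_mul]
  gcongr
  exact abs_le.2 ⟨(neg_pi_div_two_lt_arctan _).le, (arctan_lt_pi_div_two _).le⟩

theorem hasDerivAt_arctanTerm (hp : 1 < p) (s : ℝ) :
    HasDerivAt (arctanTerm p) ((p - 2) / (p * (p - 1 + s ^ 2))) s := by
  have hr : 0 < √(p - 1) := sqrt_pos.2 (sub_pos.2 hp)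
  have hsq : p - 1 = √(p - 1) ^ 2 := (sq_sqrt (sub_pos.2 hp).le).symm
  refine (((hasDerivAt_id s).div_const √(p - 1)).arctan.const_mul
    ((p - 2) / (p * √(p - 1)))).congr_deriv ?_
  have hden : p - 1 + s ^ 2 = √(p - 1) ^ 2 * (1 + (s / √(p - 1)) ^ 2) := by
    field_simp
    rw [← hsq]
  rw [hden, id]
  field_simp

theorem realGammaPlus_eq_exp (p : ℝ) (hs : s ∈ Ioo (-1) 1) :
    realGammaPlus p s = exp (logGammaPlus p s) := by
  have h_add : 0 < 1 + s := by linarith [hs.1]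
  have h_sub : 0 < 1 - s := by linarith [hs.2]
  rw [realGammaPlus, rpow_def_of_pos (div_pos h_add h_sub), ← exp_add,
    log_div h_add.ne' h_sub.ne', logGammaPlus, arctanTerm]
  ring_nf

theorem realGammaPlus_pos (p : ℝ) (hs : s ∈ Ioo (-1) 1) : 0 < realGammaPlus p s := by
  rw [realGammaPlus_eq_exp p hs]
  exact exp_pos _

theorem realGammaPlus_zero (p : ℝ) : realGammaPlus p 0 = 1 := by
  simp [realGammaPlus]

theorem realGammaPlus_neg (p : ℝ) (hs : s ∈ Ioo (-1) 1) :
    realGammaPlus p (-s) = (realGammaPlus p s)⁻¹ := by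
  have hs_neg : -s ∈ Ioo (-1) 1 := ⟨neg_lt_neg hs.2, neg_lt.1 hs.1⟩
  rw [realGammaPlus_eq_exp p hs, realGammaPlus_eq_exp p hs_neg, ← exp_neg, logGammaPlus,
    logGammaPlus, arctanTerm_neg]
  ring_nf

theorem profilePlus_neg (p s : ℝ) : profilePlus p (-s) = profilePlus p s := by
  rw [profilePlus, profilePlus, neg_sq]

theorem profilePlus_eq_exp_logQuotient_mul (hp : 1 < p) (hs : s ∈ Ioo (-1) 1) :
    profilePlus p s = exp (logQuotient p s) * realGammaPlus p s := by
  have h_add : 0 < 1 + s := by linarith [hs.1]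
  have h_sub : 0 < 1 - s := by linarith [hs.2]
  have h_factor : 1 - s ^ 2 = (1 + s) * (1 - s) := by ring
  rw [realGammaPlus_eq_exp p hs, profilePlus, h_factor, rpow_def_of_pos (by positivity),
    rpow_def_of_pos (mul_pos h_add h_sub), ← exp_add, ← exp_add, log_mul h_add.ne' h_sub.ne',
    logQuotient, logGammaPlus]
  ring_nf

theorem slopePlus_eq_exp_logQuotient_one (hp : 1 < p) : slopePlus p = exp (logQuotient p 1) := by
  have : 0 < p - 1 := sub_pos.2 hp
  have hbase : 1 - 1 / p = (1 + 1 ^ 2 / (p - 1))⁻¹ := by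
    field_simp
    ring
  have hlog : log 4 = 2 * log (1 + 1) := by
    rw [show (4 : ℝ) = (1 + 1) ^ 2 by norm_num, log_pow, Nat.cast_ofNat]
  rw [slopePlus, hbase, rpow_def_of_pos (by positivity), rpow_def_of_pos four_pos, ← exp_add,
    ← exp_add, log_inv, hlog, logQuotient, arctanTerm]
  congr 1
  field_simp
  ring

theorem hasDerivAt_logGammaPlus (hp : 1 < p) (hs : s ∈ Ioo (-1) 1) :
    HasDerivAt (logGammaPlus p) ((1 + s ^ 2) / ((p - 1 + s ^ 2) * ((1 + s) * (1 - s)))) s := by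
  have : 0 < p - 1 := sub_pos.2 hp
  have h_add : 0 < 1 + s := by linarith [hs.1]
  have h_sub : 0 < 1 - s := by linarith [hs.2]
  have d_add := ((hasDerivAt_id' s).const_add 1).log h_add.ne'
  have d_sub := ((hasDerivAt_id' s).const_sub 1).log h_sub.ne'
  refine (((d_add.sub d_sub).const_mul (1 / p)).sub (hasDerivAt_arctanTerm hp s)).congr_deriv ?_
  field_simp
  ring

theorem hasDerivAt_logQuotient (hp : 1 < p) (hs : -1 < s) :
    HasDerivAt (logQuotient p) (-((1 + s ^ 2) / ((p - 1 + s ^ 2) * (1 + s)))) s := by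
  have : 0 < p - 1 := sub_pos.2 hp
  have h_add : 0 < 1 + s := by linarith
  have h_quad : 1 + s ^ 2 / (p - 1) = (p - 1 + s ^ 2) / (p - 1) := by field_simp
  have d_quad := (((hasDerivAt_pow 2 s).div_const (p - 1)).const_add 1).log
    (ne_of_gt (by positivity))
  have d_add := ((hasDerivAt_id' s).const_add 1).log h_add.ne'
  refine (((d_quad.const_mul (1 / p - 1 / 2)).sub (d_add.const_mul (2 / p))).add
    (hasDerivAt_arctanTerm hp s)).congr_deriv ?_
  rw [h_quad]
  push_cast
  field_simp
  ring

theorem strictMonoOn_realGammaPlus (hp : 1 < p) :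
    StrictMonoOn (realGammaPlus p) (Ioo (-1) 1) := by
  have h_log : StrictMonoOn (logGammaPlus p) (Ioo (-1) 1) := by
    refine strictMonoOn_of_deriv_pos (convex_Ioo _ _)
      (fun x hx ↦ (hasDerivAt_logGammaPlus hp hx).continuousAt.continuousWithinAt) fun x hx ↦ ?_
    rw [interior_Ioo] at hx
    rw [(hasDerivAt_logGammaPlus hp hx).deriv]
    have h_add : 0 < 1 + x := by linarith [hx.1]
    have h_sub : 0 < 1 - x := by linarith [hx.2]
    positivity
  exact (exp_strictMono.comp_strictMonoOn h_log).congr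
    fun x hx ↦ (realGammaPlus_eq_exp p hx).symm

theorem nonneg_of_one_le_realGammaPlus (hp : 1 < p) (hs : s ∈ Ioo (-1) 1)
    (h : 1 ≤ realGammaPlus p s) : 0 ≤ s := by
  rw [← realGammaPlus_zero p] at h
  exact ((strictMonoOn_realGammaPlus hp).le_iff_le (by norm_num) hs).1 h

theorem strictAntiOn_logQuotient (hp : 1 < p) : StrictAntiOn (logQuotient p) (Ioi (-1)) := by
  refine strictAntiOn_of_deriv_neg (convex_Ioi _)
    (fun x hx ↦ (hasDerivAt_logQuotient hp hx).continuousAt.continuousWithinAt) fun x hx ↦ ?_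
  rw [interior_Ioi] at hx
  rw [(hasDerivAt_logQuotient hp hx).deriv, neg_lt_zero]
  have h_add : 0 < 1 + x := neg_lt_iff_pos_add'.1 hx
  positivity

theorem logQuotient_nonpos (hp : 1 < p) (hs : 0 ≤ s) : logQuotient p s ≤ 0 := by
  have h := (strictAntiOn_logQuotient hp).antitoneOn (a := 0) (b := s)
    (by norm_num) (neg_one_lt_zero.trans_le hs) hs
  simpa [logQuotient, arctanTerm_zero] using h

theorem exp_logQuotient_sub_le (hp : 1 < p) (hs : s ∈ Icc 0 1) :
    exp (logQuotient p s) - exp (logQuotient p 1) ≤ 2 / (p - 1) * (1 - s) := by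
  have hderiv (x : ℝ) (hx : x ∈ Icc 0 1) := (hasDerivAt_logQuotient hp
    (neg_one_lt_zero.trans_le hx.1)).exp
  have hbound : ∀ x ∈ interior (Icc (0 : ℝ) 1),
      -(2 / (p - 1)) ≤ deriv (fun y ↦ exp (logQuotient p y)) x := by
    intro x hx
    obtain ⟨hx0, hx1⟩ := interior_subset hx
    rw [(hderiv x ⟨hx0, hx1⟩).deriv, mul_neg, neg_le_neg_iff]
    have h_exp : exp (logQuotient p x) ≤ 1 := exp_le_one_iff.2 (logQuotient_nonpos hp hx0)
    calc exp (logQuotient p x) * ((1 + x ^ 2) / ((p - 1 + x ^ 2) * (1 + x)))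
        ≤ 1 * ((1 + 1 ^ 2) / ((p - 1 + 0) * (1 + 0))) := by
          gcongr
          positivity
      _ = 2 / (p - 1) := by ring
  have h := (convex_Icc 0 1).mul_sub_le_image_sub_of_le_deriv
    (fun x hx ↦ (hderiv x hx).continuousAt.continuousWithinAt)
    (fun x hx ↦ (hderiv x (interior_subset hx)).differentiableAt.differentiableWithinAt)
    hbound s hs 1 (right_mem_Icc.2 zero_le_one) hs.2
  linarith

theorem one_sub_mul_realGammaPlus_rpow (hp : p ≠ 0) (hs : s ∈ Ioo (-1) 1) :
    (1 - s) * realGammaPlus p s ^ p = (1 + s) * exp (-(p * arctanTerm p s)) := by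
  have h_add : 0 < 1 + s := by linarith [hs.1]
  have h_sub : 0 < 1 - s := by linarith [hs.2]
  have h_exponent : logGammaPlus p s * p =
      log (1 + s) - log (1 - s) + -(p * arctanTerm p s) := by
    rw [logGammaPlus]
    field_simp
    ring
  rw [realGammaPlus_eq_exp p hs, ← exp_mul, h_exponent, exp_add, exp_sub, exp_log h_add,
    exp_log h_sub]
  field_simp

theorem exists_one_sub_le_mul_realGammaPlus_rpow_neg (hp : 0 < p) :
    ∃ C, 0 < C ∧ ∀ s ∈ Ioo (-1) 1, 1 - s ≤ C * realGammaPlus p s ^ (-p) := by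
  refine ⟨2 * exp (p * (|(p - 2) / (p * √(p - 1))| * (π / 2))), by positivity, fun s hs ↦ ?_⟩
  have hΓ := realGammaPlus_pos p hs
  rw [rpow_neg hΓ.le, ← div_eq_mul_inv, le_div_iff₀ (rpow_pos_of_pos hΓ p),
    one_sub_mul_realGammaPlus_rpow hp.ne' hs, ← mul_neg]
  gcongr
  · linarith [hs.2]
  · exact (neg_le_abs _).trans (abs_arctanTerm_le p s)

theorem slopePlus_mul_realGammaPlus_lt_profilePlus (hp : 1 < p) (hs : s ∈ Ioo (-1) 1) :
    slopePlus p * realGammaPlus p s < profilePlus p s := by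
  rw [profilePlus_eq_exp_logQuotient_mul hp hs, slopePlus_eq_exp_logQuotient_one hp]
  have h_log : logQuotient p 1 < logQuotient p s :=
    strictAntiOn_logQuotient hp hs.1 (by norm_num) hs.2
  exact mul_lt_mul_of_pos_right (exp_lt_exp.2 h_log) (realGammaPlus_pos p hs)

theorem exists_profilePlus_sub_le (hp : 1 < p) :
    ∃ C, 0 < C ∧ ∀ s ∈ Ico 0 1,
      profilePlus p s - slopePlus p * realGammaPlus p s ≤ C * realGammaPlus p s ^ (1 - p) := by
  obtain ⟨C, hC, h_sub⟩ := exists_one_sub_le_mul_realGammaPlus_rpow_neg (zero_lt_one.trans hp)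
  refine ⟨2 / (p - 1) * C, by positivity, fun s hs ↦ ?_⟩
  have hs' : s ∈ Ioo (-1) 1 := ⟨neg_one_lt_zero.trans_le hs.1, hs.2⟩
  have hΓ := realGammaPlus_pos p hs'
  calc profilePlus p s - slopePlus p * realGammaPlus p s
      = (exp (logQuotient p s) - exp (logQuotient p 1)) * realGammaPlus p s := by
        rw [profilePlus_eq_exp_logQuotient_mul hp hs', slopePlus_eq_exp_logQuotient_one hp, sub_mul]
    _ ≤ 2 / (p - 1) * (1 - s) * realGammaPlus p s := by
        gcongr
        exact exp_logQuotient_sub_le hp (Ico_subset_Icc_self hs)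
    _ ≤ 2 / (p - 1) * (C * realGammaPlus p s ^ (-p)) * realGammaPlus p s := by
        gcongr
        exact h_sub s hs'
    _ = 2 / (p - 1) * C * realGammaPlus p s ^ (1 - p) := by
        rw [sub_eq_neg_add 1 p, rpow_add_one hΓ.ne']
        ring

theorem tendsto_div_id_of_sub_isBigO_rpow {f : ℝ → ℝ} {c q : ℝ} (hq : q < 1)
    (hf : (fun t ↦ f t - c * t) =O[atTop] fun t ↦ t ^ q) :
    Tendsto (fun t ↦ f t / t) atTop (𝓝 c) := by
  have h_rpow : Tendsto (fun t : ℝ ↦ t ^ q * t⁻¹) atTop (𝓝 0) := by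
    refine (tendsto_rpow_neg_atTop (sub_pos.2 hq)).congr' ?_
    filter_upwards [eventually_gt_atTop 0] with t ht
    rw [neg_sub, rpow_sub_one ht.ne', div_eq_mul_inv]
  have h_diff := (hf.mul (isBigO_refl (fun t : ℝ ↦ t⁻¹) atTop)).trans_tendsto h_rpow
  refine tendsto_sub_nhds_zero_iff.1 (h_diff.congr' ?_)
  filter_upwards [eventually_ne_atTop 0] with t ht
  field_simp

variable {u : ℝ → ℝ}

theorem exists_profilePlus_comp_sub_mem_Ioc (hp : 1 < p) (hu_mem : MapsTo u (Ioi 0) (Ioo (-1) 1))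
    (hu_inv : RightInvOn u (realGammaPlus p) (Ioi 0)) :
    ∃ C, 0 < C ∧ ∀ t, 1 ≤ t →
      profilePlus p (u t) - slopePlus p * t ∈ Ioc 0 (C * t ^ (1 - p)) := by
  obtain ⟨C, hC, h_le⟩ := exists_profilePlus_sub_le hp
  refine ⟨C, hC, fun t ht ↦ ?_⟩
  have ht0 : t ∈ Ioi 0 := zero_lt_one.trans_le ht
  have hΓ : realGammaPlus p (u t) = t := hu_inv ht0
  have hu_nonneg : 0 ≤ u t := nonneg_of_one_le_realGammaPlus hp (hu_mem ht0) (hΓ.symm ▸ ht)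
  have h_lt := slopePlus_mul_realGammaPlus_lt_profilePlus hp (hu_mem ht0)
  have h_le := h_le (u t) ⟨hu_nonneg, (hu_mem ht0).2⟩
  rw [hΓ] at h_lt h_le
  exact ⟨sub_pos.2 h_lt, h_le⟩

theorem tendsto_profilePlus_comp_div_atTop (hp : 1 < p)
    (hu_mem : MapsTo u (Ioi 0) (Ioo (-1) 1))
    (hu_inv : RightInvOn u (realGammaPlus p) (Ioi 0)) :
    Tendsto (fun t ↦ profilePlus p (u t) / t) atTop (𝓝 (slopePlus p)) := by
  obtain ⟨C, -, hC⟩ := exists_profilePlus_comp_sub_mem_Ioc hp hu_mem hu_inv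
  refine tendsto_div_id_of_sub_isBigO_rpow (q := 1 - p) (by linarith) (.of_bound C ?_)
  filter_upwards [eventually_ge_atTop 1] with t ht
  obtain ⟨h_pos, h_le⟩ := hC t ht
  rwa [norm_of_nonneg h_pos.le, norm_of_nonneg (rpow_nonneg (zero_le_one.trans ht) _)]

theorem tendsto_mul_profilePlus_comp_nhdsGT_zero (hp : 1 < p)
    (hu_mem : MapsTo u (Ioi 0) (Ioo (-1) 1))
    (hu_inv : RightInvOn u (realGammaPlus p) (Ioi 0)) :
    Tendsto (fun t ↦ t * profilePlus p (u t)) (𝓝[>] 0) (𝓝 (slopePlus p)) := by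
  have h_inv (t : ℝ) (ht : t ∈ Ioi 0) : t⁻¹ ∈ Ioi 0 := mem_Ioi.2 (inv_pos.2 ht)
  have hv_mem : MapsTo (fun t ↦ -u t⁻¹) (Ioi 0) (Ioo (-1) 1) := fun t ht ↦
    have hut := hu_mem (h_inv t ht)
    ⟨neg_lt_neg hut.2, neg_lt.1 hut.1⟩
  have hv_inv : RightInvOn (fun t ↦ -u t⁻¹) (realGammaPlus p) (Ioi 0) := fun t ht ↦ by
    rw [realGammaPlus_neg p (hu_mem (h_inv t ht)), hu_inv (h_inv t ht), inv_inv]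
  refine ((tendsto_profilePlus_comp_div_atTop hp hv_mem hv_inv).comp
    tendsto_inv_nhdsGT_zero).congr fun t ↦ ?_
  simp only [Function.comp_apply, inv_inv, profilePlus_neg, div_inv_eq_mul, mul_comm]

theorem stmt7_general (hp : 1 < p) (hu_mem : MapsTo u (Ioi 0) (Ioo (-1) 1))
    (hu_inv : RightInvOn u (realGammaPlus p) (Ioi 0)) {H : ℝ → ℝ}
    (hH : EqOn H (fun t ↦ profilePlus p (u t)) (Ioi 0)) :
    Tendsto (fun t ↦ H t / t) atTop (𝓝 (slopePlus p)) ∧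
    Tendsto (fun t ↦ t * H t) (𝓝[>] 0) (𝓝 (slopePlus p)) ∧
    ∃ C, 0 < C ∧ ∀ t, 1 ≤ t →
      0 < H t - slopePlus p * t ∧ H t - slopePlus p * t ≤ C * t ^ (1 - p) := by
  refine ⟨(tendsto_profilePlus_comp_div_atTop hp hu_mem hu_inv).congr' ?_,
    (tendsto_mul_profilePlus_comp_nhdsGT_zero hp hu_mem hu_inv).congr' ?_, ?_⟩
  · filter_upwards [eventually_gt_atTop 0] with t ht
    rw [hH ht]
  · filter_upwards [self_mem_nhdsWithin] with t ht
    rw [hH ht]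
  · obtain ⟨C, hC, h⟩ := exists_profilePlus_comp_sub_mem_Ioc hp hu_mem hu_inv
    refine ⟨C, hC, fun t ht ↦ ?_⟩
    rw [hH (zero_lt_one.trans_le ht)]
    exact h t ht

end RealParameter

/-- Asymptotics of `H₊`: with
`Θ₊ = (1 - 1/n)^((n-2)/(2n)) · 4^(-1/n) · exp( ((n-2)/(n√(n-1))) arctan(1/√(n-1)) )`
one has `H₊(t)/t → Θ₊` as `t → ∞`, `t·H₊(t) → Θ₊` as `t → 0⁺`, and
`0 < H₊(t) - Θ₊ t ≤ C t^(1-n)` for `t ≥ 1` with some constant `C > 0`. -/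
theorem stmt7 (n : ℕ) (hn : 2 ≤ n) (u : ℝ → ℝ)
    (hu_mem : ∀ t : ℝ, 0 < t → u t ∈ Set.Ioo (-1 : ℝ) 1)
    (hu_inv : ∀ t : ℝ, 0 < t → GammaPlus n (u t) = t)
    (H : ℝ → ℝ)
    (hH : ∀ t : ℝ, 0 < t →
      H t = (1 + (u t) ^ 2 / ((n : ℝ) - 1)) ^ ((1 : ℝ) / (n : ℝ) - 1 / 2) *
        (1 - (u t) ^ 2) ^ (-(1 : ℝ) / (n : ℝ)))
    (Θ : ℝ)
    (hΘ : Θ = (1 - 1 / (n : ℝ)) ^ (((n : ℝ) - 2) / (2 * (n : ℝ))) *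
        (4 : ℝ) ^ (-(1 : ℝ) / (n : ℝ)) *
        Real.exp ((((n : ℝ) - 2) / ((n : ℝ) * Real.sqrt ((n : ℝ) - 1))) *
          Real.arctan (1 / Real.sqrt ((n : ℝ) - 1)))) :
    Tendsto (fun t => H t / t) atTop (nhds Θ) ∧
    Tendsto (fun t => t * H t) (nhdsWithin 0 (Set.Ioi (0 : ℝ))) (nhds Θ) ∧
    ∃ C : ℝ, 0 < C ∧ ∀ t : ℝ, 1 ≤ t →
      0 < H t - Θ * t ∧ H t - Θ * t ≤ C * t ^ ((1 : ℝ) - (n : ℝ)) := by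
  subst hΘ
  exact stmt7_general (Nat.one_lt_cast.2 hn) (fun t ↦ hu_mem t) (fun t ↦ hu_inv t) (fun t ↦ hH t)
end
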